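/- arXiv:2107.00251 — 2 statements merged into one kernel-verified Lean document; each statement's English description precedes it below -/
import Mathlib

section
/- (L1 partitioning theorem.) Let a < b be reals with f(V) ∩ (a,b) = ∅, and define g : V → {a,b} by g(v) = a if f(v) ≤ a and g(v) = b if f(v) ≥ b. Let g′ : V → {a,b} be isotonic and minimize the weighted L1 error relative to (g, w) among all isotonic {a,b}-valued functions. Then there exists an isotonic f′ : V → ℝ that minimizes the weighted L1 error relative to (f, w) among all isotonic functions and satisfies: f′(v) ≤ a whenever g′(v) = a, and f′(v) ≥ b whenever g′(v) = b. -/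
theorem aux_int (x M : ℝ) (h0 : 0 ≤ x) (hM : x ≤ M) :
    ∫ t in (0:ℝ)..M, (if t < x then (1:ℝ) else 0) = x := by
  rw [intervalIntegral.integral_of_le (h0.trans hM)]
  have : (fun t : ℝ => if t < x then (1:ℝ) else 0) = (Set.Iio x).indicator (fun _ => 1) := by
    ext t; simp [Set.indicator]
  rw [this, MeasureTheory.setIntegral_indicator measurableSet_Iio]
  have h2 : Set.Ioc 0 M ∩ Set.Iio x = Set.Ioo 0 x := by
    ext t; simp only [Set.mem_inter_iff, Set.mem_Ioc, Set.mem_Iio, Set.mem_Ioo]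
    constructor
    · rintro ⟨⟨h, _⟩, h'⟩; exact ⟨h, h'⟩
    · rintro ⟨h, h'⟩; exact ⟨⟨h, by linarith⟩, h'⟩
  rw [h2]
  simp [h0]

theorem aux_integrable (x M : ℝ) :
    IntervalIntegrable (fun t : ℝ => if t < x then (1:ℝ) else 0) MeasureTheory.volume 0 M := by
  apply Antitone.intervalIntegrable
  intro s t hst
  dsimp only
  split_ifs <;> first | linarith | norm_num

theorem aux_layer {V : Type*} [Fintype V] (c q : V → ℝ) (M K : ℝ) (hM : 0 ≤ M)
    (hq0 : ∀ v, 0 ≤ q v) (hqM : ∀ v, q v ≤ M)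
    (hK : ∀ t : ℝ, K ≤ ∑ v, c v * (if t < q v then (1:ℝ) else 0)) :
    M * K ≤ ∑ v, c v * q v := by
  have h1 : ∑ v, c v * q v =
      ∫ t in (0:ℝ)..M, ∑ v, c v * (if t < q v then (1:ℝ) else 0) := by
    rw [intervalIntegral.integral_finsetSum]
    · refine Finset.sum_congr rfl fun v _ => ?_
      rw [intervalIntegral.integral_const_mul, aux_int _ _ (hq0 v) (hqM v)]
    · intro v _
      exact (aux_integrable _ _).const_mul _
  have h2 : M * K = ∫ t in (0:ℝ)..M, K := by simp
  rw [h1, h2]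
  apply intervalIntegral.integral_mono_on hM
  · simp
  · have h3 : (fun t : ℝ => ∑ v, c v * (if t < q v then (1:ℝ) else 0)) =
        ∑ v, fun t : ℝ => c v * (if t < q v then (1:ℝ) else 0) := by
      ext t; simp only [Finset.sum_apply]
    rw [h3]
    apply IntervalIntegrable.sum
    intro v _
    exact (aux_integrable _ _).const_mul _
  · intro t _; exact hK t

theorem aux_exists {V : Type*} [PartialOrder V] [Fintype V] [Nonempty V]
    (f w : V → ℝ) (hw : ∀ v, 0 ≤ w v) :
    ∃ f' : V → ℝ, Monotone f' ∧ ∀ h : V → ℝ, Monotone h →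
        ∑ v, w v * |f' v - f v| ≤ ∑ v, w v * |h v - f v| := by
  obtain ⟨m, hm⟩ := (Set.finite_range f).bddBelow
  obtain ⟨K, hK⟩ := (Set.finite_range f).bddAbove
  have hm' : ∀ v, m ≤ f v := fun v => hm ⟨v, rfl⟩
  have hK' : ∀ v, f v ≤ K := fun v => hK ⟨v, rfl⟩
  have hmK : m ≤ K := (hm' (Classical.arbitrary V)).trans (hK' _)
  have hcl : IsClosed {h : V → ℝ | Monotone h} := by
    have : {h : V → ℝ | Monotone h} = ⋂ u : V, ⋂ v : V, ⋂ _ : u ≤ v, {h | h u ≤ h v} := by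
      ext h; simp [Monotone]
    rw [this]
    exact isClosed_iInter fun u => isClosed_iInter fun v => isClosed_iInter fun _ =>
      isClosed_le (continuous_apply u) (continuous_apply v)
  have hcomp : IsCompact (Set.Icc (fun _ : V => m) (fun _ => K) ∩ {h : V → ℝ | Monotone h}) :=
    isCompact_Icc.inter_right hcl
  obtain ⟨f', ⟨_, hf'⟩, hmin⟩ := hcomp.exists_isMinOn
    (f := fun h : V → ℝ => ∑ v, w v * |h v - f v|)
    ⟨fun _ => m, ⟨le_refl _, fun _ => hmK⟩, fun _ _ _ => le_refl _⟩ (by fun_prop)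
  refine ⟨f', hf', fun h hh => ?_⟩
  have := hmin (a := fun v => max m (min (h v) K))
    ⟨⟨fun v => le_max_left _ _, fun v => max_le hmK (min_le_right _ _)⟩,
      fun u v huv => max_le_max le_rfl (min_le_min (hh huv) le_rfl)⟩
  refine le_trans this (Finset.sum_le_sum fun v _ => mul_le_mul_of_nonneg_left ?_ (hw v))
  have h1 := hm' v
  have h2 := hK' v
  rcases max_cases m (min (h v) K) with h3 | h3 <;> rcases min_cases (h v) K with h4 | h4 <;>
  rcases abs_cases (max m (min (h v) K) - f v) with h5 | h5 <;>
  rcases abs_cases (h v - f v) with h6 | h6 <;> linarith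

/-- L1 partitioning theorem: if no value of `f` lies in `(a,b)`, `g` rounds `f` to
`{a,b}`, and `g'` is an isotonic `{a,b}`-valued L1 regression of `g`, then some
L1-optimal isotonic regression `f'` of `f` satisfies `f' v ≤ a` wherever `g' v = a`
and `f' v ≥ b` wherever `g' v = b`. -/
theorem L1_partitioning {V : Type*} [PartialOrder V] [Fintype V] [Nonempty V]
    (f w : V → ℝ) (hw : ∀ v, 0 ≤ w v) (a b : ℝ) (hab : a < b)
    (hgap : ∀ v : V, f v ≤ a ∨ b ≤ f v)
    (g : V → ℝ) (hg : ∀ v : V, g v = if f v ≤ a then a else b)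
    (g' : V → ℝ) (hg'mono : Monotone g') (hg'val : ∀ v, g' v = a ∨ g' v = b)
    (hg'opt : ∀ h : V → ℝ, Monotone h → (∀ v, h v = a ∨ h v = b) →
      ∑ v, w v * |g' v - g v| ≤ ∑ v, w v * |h v - g v|) :
    ∃ f' : V → ℝ, Monotone f' ∧
      (∀ h : V → ℝ, Monotone h →
        ∑ v, w v * |f' v - f v| ≤ ∑ v, w v * |h v - f v|) ∧
      (∀ v : V, (g' v = a → f' v ≤ a) ∧ (g' v = b → b ≤ f' v)) := by
  classical
  obtain ⟨h, hh, hopt⟩ := aux_exists f w hw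
  set s : V → ℝ := fun v => if f v ≤ a then 1 else -1 with hs
  -- optimality in linear form
  have hlin : ∀ k : V → ℝ, (∀ v, k v = a ∨ k v = b) →
      ∑ v, w v * |k v - g v| = ∑ v, (w v * s v) * k v - ∑ v, (w v * s v) * g v := by
    intro k hk
    rw [← Finset.sum_sub_distrib]
    refine Finset.sum_congr rfl fun v _ => ?_
    have : |k v - g v| = s v * (k v - g v) := by
      rw [hg v]
      simp only [hs]
      split_ifs <;> rcases hk v with e | e <;> rw [e] <;> simp
      · linarith
      · rw [abs_of_neg (by linarith)]; ring
    rw [this]; ring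
  have hind : ∀ P : V → Prop, (∀ u v, u ≤ v → P u → P v) →
      ∑ v, (w v * s v) * (if g' v = b then (1:ℝ) else 0) ≤
        ∑ v, (w v * s v) * (if P v then (1:ℝ) else 0) := by
    intro P hP
    have h1 := hg'opt (fun v => if P v then b else a) (by
      intro u v huv
      dsimp only
      by_cases hu : P u
      · simp [hu, hP u v huv hu]
      · simp only [hu, if_false]; split_ifs <;> linarith) (by
      intro v; split_ifs <;> simp)
    rw [hlin g' hg'val, hlin _ (by intro v; split_ifs <;> simp)] at h1
    have e1 : ∑ v, (w v * s v) * g' v =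
        (b - a) * ∑ v, (w v * s v) * (if g' v = b then (1:ℝ) else 0) + ∑ v, (w v * s v) * a := by
      rw [Finset.mul_sum, ← Finset.sum_add_distrib]
      refine Finset.sum_congr rfl fun v _ => ?_
      rcases hg'val v with e | e <;> simp only [e, hab.ne, if_true, if_false] <;> ring
    have e2 : ∑ v, (w v * s v) * (if P v then b else a) =
        (b - a) * ∑ v, (w v * s v) * (if P v then (1:ℝ) else 0) + ∑ v, (w v * s v) * a := by
      rw [Finset.mul_sum, ← Finset.sum_add_distrib]
      refine Finset.sum_congr rfl fun v _ => ?_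
      split_ifs <;> ring
    rw [e1, e2] at h1
    have hba : 0 < b - a := by linarith
    exact le_of_mul_le_mul_left (by linarith) hba
  have hup : ∀ u v, u ≤ v → g' u = b → g' v = b := by
    intro u v huv hu
    rcases hg'val v with e | e
    · have := hg'mono huv; linarith
    · exact e
  set F : V → ℝ := fun v => if g' v = b then max (h v) b else min (h v) a with hF
  have hFmono : Monotone F := by
    intro u v huv
    have := hh huv
    simp only [hF]
    by_cases hu : g' u = b
    · simp only [hu, hup u v huv hu, if_true]
      exact max_le_max this le_rfl
    · simp only [hu, if_false]
      split_ifs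
      · exact (min_le_left _ _).trans (this.trans (le_max_left _ _))
      · exact min_le_min this le_rfl
  have hpt : ∀ v, |F v - f v| - |h v - f v| ≤ s v * (F v - h v) := by
    intro v
    simp only [hF, hs]
    have hgv := hgap v
    by_cases h1 : g' v = b <;> by_cases h2 : f v ≤ a <;> simp only [h1, h2, if_true, if_false]
    · rcases max_cases (h v) b with h3 | h3 <;>
      rcases abs_cases (max (h v) b - f v) with h5 | h5 <;>
      rcases abs_cases (h v - f v) with h6 | h6 <;> linarith
    · have h4 : b ≤ f v := by tauto
      rcases max_cases (h v) b with h3 | h3 <;>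
      rcases abs_cases (max (h v) b - f v) with h5 | h5 <;>
      rcases abs_cases (h v - f v) with h6 | h6 <;> linarith
    · rcases min_cases (h v) a with h3 | h3 <;>
      rcases abs_cases (min (h v) a - f v) with h5 | h5 <;>
      rcases abs_cases (h v - f v) with h6 | h6 <;> linarith
    · have h4 : b ≤ f v := by tauto
      rcases min_cases (h v) a with h3 | h3 <;>
      rcases abs_cases (min (h v) a - f v) with h5 | h5 <;>
      rcases abs_cases (h v - f v) with h6 | h6 <;> linarith
  obtain ⟨N, hN⟩ := (Set.finite_range (fun v => |F v - h v|)).bddAbove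
  have hN' : ∀ v, |F v - h v| ≤ N := fun v => hN ⟨v, rfl⟩
  have hN0 : 0 ≤ N := (abs_nonneg _).trans (hN' (Classical.arbitrary V))
  set q : V → ℝ := fun v => (2 * N) * (if g' v = b then (1:ℝ) else 0) - (F v - h v) with hq
  have hqA : ∀ v, g' v ≠ b → q v = max (h v - a) 0 := by
    intro v hv
    simp only [hq, hF, hv, if_false]
    rcases min_cases (h v) a with h3 | h3 <;> rcases max_cases (h v - a) 0 with h4 | h4 <;> linarith
  have hqB : ∀ v, g' v = b → q v = 2 * N - max (b - h v) 0 := by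
    intro v hv
    simp only [hq, hF, hv, if_true]
    rcases max_cases (h v) b with h3 | h3 <;> rcases max_cases (b - h v) 0 with h4 | h4 <;> linarith
  have hqA' : ∀ v, g' v ≠ b → q v ≤ N := by
    intro v hv
    have := abs_le.1 (hN' v)
    simp only [hq, hv, if_false]; linarith [this.1]
  have hqB' : ∀ v, g' v = b → N ≤ q v := by
    intro v hv
    have := abs_le.1 (hN' v)
    simp only [hq, hv, if_true]; linarith [this.2]
  have hqmono : Monotone q := by
    intro u v huv
    have h1 := hh huv
    by_cases hu : g' u = b
    · rw [hqB u hu, hqB v (hup u v huv hu)]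
      have : max (b - h v) 0 ≤ max (b - h u) 0 := max_le_max (by linarith) le_rfl
      linarith
    · by_cases hv : g' v = b
      · exact (hqA' u hu).trans (hqB' v hv)
      · rw [hqA u hu, hqA v hv]
        exact max_le_max (by linarith) le_rfl
  have hlay := aux_layer (fun v => w v * s v) q (2 * N) _ (by linarith)
    (by
      intro v
      by_cases hv : g' v = b
      · exact hN0.trans (hqB' v hv)
      · rw [hqA v hv]; exact le_max_right _ _)
    (by
      intro v
      by_cases hv : g' v = b
      · rw [hqB v hv]; linarith [le_max_right (b - h v) 0]
      · linarith [hqA' v hv])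
    (fun t => hind (fun v => t < q v) (fun u v huv hu => lt_of_lt_of_le hu (hqmono huv)))
  have hqsum : ∑ v, (w v * s v) * q v =
      (2 * N) * ∑ v, (w v * s v) * (if g' v = b then (1:ℝ) else 0)
        - ∑ v, (w v * s v) * (F v - h v) := by
    rw [Finset.mul_sum, ← Finset.sum_sub_distrib]
    refine Finset.sum_congr rfl fun v _ => ?_
    simp only [hq]; ring
  have hle : ∑ v, w v * |F v - f v| - ∑ v, w v * |h v - f v| ≤
      ∑ v, (w v * s v) * (F v - h v) := by
    rw [← Finset.sum_sub_distrib]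
    refine Finset.sum_le_sum fun v _ => ?_
    have := mul_le_mul_of_nonneg_left (hpt v) (hw v)
    linarith
  refine ⟨F, hFmono, fun k hk => ?_, fun v => ⟨fun hv => ?_, fun hv => ?_⟩⟩
  · have := hopt k hk
    linarith
  · simp only [hF, hv, hab.ne, if_false]; exact min_le_right _ _
  · simp only [hF, hv, if_true]; exact le_max_right _ _
end

section
/- (Rendezvous graph is a Steiner 2-transitive closure of domination order.) Fix d ≥ 1 and k_1, …, k_d ≥ 1, and let p = (p_1, …, p_d) and q = (q_1, …, q_d) with each p_i, q_i a binary string of length k_i and p ≠ q. Then val(p_i) ≤ val(q_i) for all i (p is dominated by q) if and only if there exists a Steiner vertex s = (s_1, …, s_d), where each s_i is a Steiner string of length k_i and at least one s_i contains a *, such that p_i ⊑ s_i and s_i ⊑ q_i for all 1 ≤ i ≤ d. Moreover, when such an s exists, it is unique. -/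
/-- The value of a binary string of length `k`, most significant bit first. -/
def val {k : ℕ} (q : Fin k → Bool) : ℕ :=
  ∑ i : Fin k, if q i then 2 ^ (k - 1 - (i : ℕ)) else 0

/-- A Steiner string of length `k`: a binary prefix followed by `*`'s (here a `*` is
encoded as `none`), so the `none` positions form a suffix. -/
structure SteinerStr (k : ℕ) where
  t : Fin k → Option Bool
  suffix : ∀ i j : Fin k, i ≤ j → t i = none → t j = none

/-- A Steiner string contains a `*` iff some position is `none`. -/
def SteinerStr.hasStar {k : ℕ} (s : SteinerStr k) : Prop := ∃ i, s.t i = none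

/-- `q ⊑ t` for a binary string `q` and Steiner string `t` with binary prefix `p` of
length `ℓ`: `q` agrees with `p` on the prefix and, if `ℓ < k`, the bit of `q` at the
first `*` position is `0`. -/
def belowSteiner {k : ℕ} (q : Fin k → Bool) (s : SteinerStr k) : Prop :=
  (∀ i : Fin k, ∀ b : Bool, s.t i = some b → q i = b) ∧
  (∀ i : Fin k, s.t i = none → (∀ j : Fin k, j < i → (s.t j).isSome) → q i = false)

/-- `t ⊑ q` for a Steiner string `t` with binary prefix `p` of length `ℓ` and a binary
string `q`: `q` agrees with `p` on the prefix and, if `ℓ < k`, the bit of `q` at the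
first `*` position is `1`. -/
def steinerBelow {k : ℕ} (s : SteinerStr k) (q : Fin k → Bool) : Prop :=
  (∀ i : Fin k, ∀ b : Bool, s.t i = some b → q i = b) ∧
  (∀ i : Fin k, s.t i = none → (∀ j : Fin k, j < i → (s.t j).isSome) → q i = true)

theorem aux_val_succ {k : ℕ} (q : Fin (k+1) → Bool) :
    val q = (if q 0 then 2 ^ k else 0) + val (fun i => q (Fin.succ i)) := by
  unfold val
  rw [Fin.sum_univ_succ]
  congr 1
  apply Finset.sum_congr rfl
  intro i _
  have : k + 1 - 1 - ((Fin.succ i : Fin (k+1)) : ℕ) = k - 1 - (i : ℕ) := by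
    simp only [Fin.val_succ]; omega
  rw [this]

theorem aux_val_lt_pow {k : ℕ} (q : Fin k → Bool) : val q < 2 ^ k := by
  induction k with
  | zero => simp [val]
  | succ k ih =>
    rw [aux_val_succ]
    have := ih (fun i => q (Fin.succ i))
    rw [pow_succ]
    split_ifs <;> omega

theorem aux_val_lt {k : ℕ} (p q : Fin k → Bool) (i : Fin k) (h : ∀ j < i, p j = q j)
    (hp : p i = false) (hq : q i = true) : val p < val q := by
  induction k with
  | zero => exact i.elim0
  | succ k ih =>
    rw [aux_val_succ p, aux_val_succ q]
    induction i using Fin.cases with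
    | zero =>
      have := aux_val_lt_pow (fun i => p (Fin.succ i))
      simp only [hp, hq, if_true]
      simp
      omega
    | succ i =>
      rw [h 0 (Fin.succ_pos i)]
      have := ih (fun i => p (Fin.succ i)) (fun i => q (Fin.succ i)) i
        (fun j hj => h _ (Fin.succ_lt_succ_iff.2 hj)) hp hq
      omega

theorem aux_first {k : ℕ} (P : Fin k → Prop) (i : Fin k) (h : P i) :
    ∃ j ≤ i, P j ∧ ∀ l < j, ¬ P l := by
  induction i using WellFoundedLT.induction with
  | ind i ih =>
    by_cases hh : ∃ l < i, P l
    · obtain ⟨l, hl, hP⟩ := hh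
      obtain ⟨j, hj, h2⟩ := ih l hl hP
      exact ⟨j, hj.trans hl.le, h2⟩
    · push Not at hh
      exact ⟨i, le_rfl, h, hh⟩

theorem aux_none_iff {k : ℕ} {p q : Fin k → Bool} {s : SteinerStr k}
    (h1 : belowSteiner p s) (h2 : steinerBelow s q) (i : Fin k) :
    s.t i = none ↔ ∃ j ≤ i, p j ≠ q j := by
  constructor
  · intro h
    obtain ⟨j, hj, hn, hl⟩ := aux_first (fun i => s.t i = none) i h
    have hl' : ∀ l : Fin k, l < j → (s.t l).isSome := fun l hlj =>
      Option.isSome_iff_ne_none.2 (hl l hlj)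
    refine ⟨j, hj, ?_⟩
    rw [h1.2 j hn hl', h2.2 j hn hl']
    simp
  · rintro ⟨j, hj, hne⟩
    apply s.suffix j i hj
    by_contra hc
    obtain ⟨b, hb⟩ := Option.ne_none_iff_exists'.1 hc
    exact hne ((h1.1 j b hb).trans (h2.1 j b hb).symm)

theorem aux_unique {k : ℕ} {p q : Fin k → Bool} {s s' : SteinerStr k}
    (h1 : belowSteiner p s) (h2 : steinerBelow s q)
    (h1' : belowSteiner p s') (h2' : steinerBelow s' q) : s = s' := by
  have : s.t = s'.t := by
    funext i
    have e := (aux_none_iff h1 h2 i).trans (aux_none_iff h1' h2' i).symm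
    rcases h : s.t i with _ | b
    · exact (e.1 h).symm
    · rcases h' : s'.t i with _ | b'
      · rw [e.2 h'] at h; cases h
      · rw [← h1.1 i b h, ← h1'.1 i b' h']
  cases s; cases s'; cases this; rfl

theorem aux_le {k : ℕ} {p q : Fin k → Bool} {s : SteinerStr k}
    (h1 : belowSteiner p s) (h2 : steinerBelow s q) : val p ≤ val q := by
  by_cases hpq : p = q
  · rw [hpq]
  · obtain ⟨i, hi⟩ := Function.ne_iff.1 hpq
    obtain ⟨j, -, hj, hl⟩ := aux_first (fun i => p i ≠ q i) i hi
    have hn := (aux_none_iff h1 h2 j).2 ⟨j, le_rfl, hj⟩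
    have hs : ∀ l : Fin k, l < j → (s.t l).isSome := by
      intro l hlj
      rw [Option.isSome_iff_ne_none]
      intro hc
      obtain ⟨m, hm, hne⟩ := (aux_none_iff h1 h2 l).1 hc
      exact hl m (lt_of_le_of_lt hm hlj) hne
    exact (aux_val_lt p q j (fun l hlj => not_not.1 (hl l hlj)) (h1.2 j hn hs) (h2.2 j hn hs)).le

open Classical in
theorem aux_exists_s18 {k : ℕ} (p q : Fin k → Bool) (h : val p ≤ val q) :
    ∃ s : SteinerStr k, belowSteiner p s ∧ steinerBelow s q := by
  let s : SteinerStr k :=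
    { t := fun i => if ∃ j ≤ i, p j ≠ q j then none else some (p i)
      suffix := by
        intro i j hij hi
        have hi' : ∃ l ≤ i, p l ≠ q l := by
          by_contra hc
          rw [if_neg hc] at hi; cases hi
        obtain ⟨l, hl, hne⟩ := hi'
        exact if_pos ⟨l, hl.trans hij, hne⟩ }
  have hn : ∀ i, s.t i = none → ∃ j ≤ i, p j ≠ q j := by
    intro i hi
    by_contra hc
    have : s.t i = some (p i) := if_neg hc
    rw [this] at hi; cases hi
  have hb : ∀ i b, s.t i = some b → p i = b ∧ p i = q i := by
    intro i b hi
    have hc : ¬ ∃ j ≤ i, p j ≠ q j := by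
      intro hc
      have : s.t i = none := if_pos hc
      rw [this] at hi; cases hi
    have : s.t i = some (p i) := if_neg hc
    rw [this] at hi
    refine ⟨Option.some.inj hi, ?_⟩
    by_contra hne
    exact hc ⟨i, le_rfl, hne⟩
  have key : ∀ i : Fin k, s.t i = none → (∀ j : Fin k, j < i → (s.t j).isSome) →
      p i = false ∧ q i = true := by
    intro i hi hs
    have hag : ∀ j < i, p j = q j := by
      intro j hj
      obtain ⟨b, hb'⟩ := Option.isSome_iff_exists.1 (hs j hj)
      exact (hb j b hb').2
    obtain ⟨j, hj, hne⟩ := hn i hi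
    have : j = i := by
      rcases hj.lt_or_eq with h' | h'
      · exact absurd (hag j h') hne
      · exact h'
    subst this
    cases hp : p j <;> cases hq : q j
    · simp [hp, hq] at hne
    · simp
    · have := aux_val_lt q p j (fun l hl => (hag l hl).symm) hq hp
      omega
    · simp [hp, hq] at hne
  exact ⟨s, ⟨fun i b h => (hb i b h).1, fun i h1 h2 => (key i h1 h2).1⟩,
    ⟨fun i b h => (hb i b h).2 ▸ (hb i b h).1, fun i h1 h2 => (key i h1 h2).2⟩⟩

/-- The rendezvous graph is a Steiner 2-transitive closure of the domination order:
for distinct points `p ≠ q` (each coordinate a binary string), `p` is dominated by `q`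
iff there is a Steiner vertex `s` (a tuple of Steiner strings, at least one containing a
`*`) with `p i ⊑ s i` and `s i ⊑ q i` in every coordinate; and such an `s` is unique. -/
theorem rendezvous_steiner_two_transitive {d : ℕ} (hd : 1 ≤ d)
    (k : Fin d → ℕ) (hk : ∀ i, 1 ≤ k i)
    (p q : (i : Fin d) → Fin (k i) → Bool) (hpq : p ≠ q) :
    ((∀ i : Fin d, val (p i) ≤ val (q i)) ↔
      ∃ s : (i : Fin d) → SteinerStr (k i),
        (∃ i, (s i).hasStar) ∧
        ∀ i : Fin d, belowSteiner (p i) (s i) ∧ steinerBelow (s i) (q i)) ∧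
    (∀ s s' : (i : Fin d) → SteinerStr (k i),
      ((∃ i, (s i).hasStar) ∧ ∀ i : Fin d, belowSteiner (p i) (s i) ∧ steinerBelow (s i) (q i)) →
      ((∃ i, (s' i).hasStar) ∧ ∀ i : Fin d, belowSteiner (p i) (s' i) ∧ steinerBelow (s' i) (q i)) →
      s = s') := by
  refine ⟨⟨fun h => ?_, ?_⟩, ?_⟩
  · choose s hs using fun i => aux_exists_s18 (p i) (q i) (h i)
    refine ⟨s, ?_, hs⟩
    obtain ⟨i, hi⟩ := Function.ne_iff.1 hpq
    obtain ⟨j, hj⟩ := Function.ne_iff.1 hi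
    exact ⟨i, j, (aux_none_iff (hs i).1 (hs i).2 j).2 ⟨j, le_rfl, hj⟩⟩
  · rintro ⟨s, -, hs⟩ i
    exact aux_le (hs i).1 (hs i).2
  · rintro s s' ⟨-, hs⟩ ⟨-, hs'⟩
    funext i
    exact aux_unique (hs i).1 (hs i).2 (hs' i).1 (hs' i).2
end
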